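/- arXiv:2104.06301 — 3 statements merged into one kernel-verified Lean document; each statement's English description precedes it below -/
import Mathlib

section
/- Let n, k, q ∈ ℕ with n ≥ 10, 2q ≤ n − 10, and k ≤ 10·2^{2q+2}, and let g : {0,1}^{3k} → {0,1} be any function. Then the number of functions f : {0,1}^{2n} → {0,1} for which there exist functions f_A : {0,1}^n → {0,1}^k, f_B : {0,1}^n → {0,1}^k and a string λ ∈ {0,1}^k such that g(f_A(x), f_B(y), λ) = f(x,y) holds for at least (3/4)·2^{2n} of the 2^{2n} pairs (x,y) ∈ {0,1}^n × {0,1}^n, is strictly less than 2^{2^{2n} − 2^n}. Equivalently, a uniformly random f : {0,1}^{2n} → {0,1} satisfies, with probability greater than 1 − 2^{−2^n}, that for every choice of f_A, f_B, λ the equality g(f_A(x), f_B(y), λ) = f(x,y) holds on fewer than 3/4 of all pairs (x,y). -/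
/-!
Give every function `f` the weight `3 ^ a`, where `a` is its number of agreements with a fixed `h`.
The total weight factors over the points of the domain, `3 + 1 = 4` for each of the `M` points, so
at most `4 ^ M / 3 ^ t` functions agree with `h` in `t ≥ 3 M / 4` places, and a union bound costs a
factor `2 ^ e` for the number of compressed functions. Since `3 ^ 6 > 2 ^ 9`, dividing by `3 ^ t`
gains a factor of more than `2 ^ (9 M / 8)`, which leaves fewer than `2 ^ (e + 7 M / 8)` functions.
For bit strings `M = 2 ^ n * 2 ^ n`, and `e = (2 * 2 ^ n + 1) * k` is at most about `5 M / 64`, well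
below `M / 8`.
-/

section Agreement

variable {α β ι : Type*}

/-- The agreement count of two functions (the complement of their Hamming distance). It is stated
with `Nat.card`, so that it needs no decidability and unfolds to the count in the theorem. -/
noncomputable def agreement (h f : α → β) : ℕ :=
  Nat.card {a // h a = f a}

theorem sum_pow_agreement [Fintype α] [DecidableEq α] [Fintype β] (h : α → β) (s : ℕ) :
    ∑ f : α → β, (s + 1) ^ agreement h f = (s + Fintype.card β) ^ Fintype.card α := by
  classical
  have weight (f : α → β) : (s + 1) ^ agreement h f = ∏ a, if h a = f a then s + 1 else 1 := by
    simp [agreement, Finset.prod_ite, Fintype.card_subtype]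
  have point (a : α) : ∑ b, (if h a = b then s + 1 else 1) = s + Fintype.card β := by
    have split (b : β) : (if h a = b then s + 1 else 1) = (if h a = b then s else 0) + 1 := by
      split_ifs <;> rfl
    simp [split, Finset.sum_add_distrib]
  simp_rw [weight, ← Fintype.prod_sum fun a b => if h a = b then s + 1 else 1, point]
  simp

theorem card_le_agreement_mul_pow_le [Finite α] [Finite β] (h : α → β) (s t : ℕ) :
    Nat.card {f // t ≤ agreement h f} * (s + 1) ^ t ≤ (s + Nat.card β) ^ Nat.card α := by
  classical
  cases nonempty_fintype α
  cases nonempty_fintype β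
  simp only [Nat.card_eq_fintype_card, ← sum_pow_agreement h s, Fintype.card_subtype]
  calc _ ≤ ∑ f with t ≤ agreement h f, (s + 1) ^ agreement h f :=
        Finset.card_nsmul_le_sum _ _ _ fun f hf =>
          Nat.pow_le_pow_right s.succ_pos (Finset.mem_filter.mp hf).2
    _ ≤ ∑ f, (s + 1) ^ agreement h f := Finset.sum_le_sum_of_subset (Finset.filter_subset _ _)

theorem card_exists_le_agreement_mul_pow_le [Finite α] [Finite β] [Finite ι]
    (h : ι → α → β) (s t : ℕ) :
    Nat.card {f // ∃ i, t ≤ agreement (h i) f} * (s + 1) ^ t ≤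
      Nat.card ι * (s + Nat.card β) ^ Nat.card α := by
  cases nonempty_fintype ι
  have union_bound : Nat.card {f // ∃ i, t ≤ agreement (h i) f} ≤
      ∑ i, Nat.card {f // t ≤ agreement (h i) f} := by
    simpa only [Set.iUnion_ofPred, ← Nat.card_coe_set_eq, Set.coe_ofPred] using
      Set.ncard_iUnion_le_of_fintype fun i => {f | t ≤ agreement (h i) f}
  calc _ ≤ (∑ i, Nat.card {f // t ≤ agreement (h i) f}) * (s + 1) ^ t := by gcongr
    _ = ∑ i, Nat.card {f // t ≤ agreement (h i) f} * (s + 1) ^ t := Finset.sum_mul ..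
    _ ≤ ∑ _i : ι, (s + Nat.card β) ^ Nat.card α :=
        Finset.sum_le_sum fun i _ => card_le_agreement_mul_pow_le (h i) s t
    _ = _ := by simp

end Agreement

section Compression

variable {X Y A B Λ Z : Type*}

/-- The compressed function `(x, y) ↦ g (f_A x) (f_B y) λ`. The triple `c = (f_A, f_B, λ)` is a
single argument so that it can index a union bound. -/
def compressed (g : A → B → Λ → Z) (c : (X → A) × (Y → B) × Λ) (p : X × Y) : Z :=
  g (c.1 p.1) (c.2.1 p.2) c.2.2

theorem card_exists_le_agreement_compressed_mul_pow_le [Finite X] [Finite Y] [Finite A] [Finite B]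
    [Finite Λ] [Finite Z] (g : A → B → Λ → Z) (s t : ℕ) :
    Nat.card {f : X → Y → Z // ∃ c, t ≤ agreement (compressed g c) (Function.uncurry f)} *
        (s + 1) ^ t ≤
      Nat.card ((X → A) × (Y → B) × Λ) * (s + Nat.card Z) ^ (Nat.card X * Nat.card Y) := by
  have card_uncurry :
      Nat.card {f : X → Y → Z // ∃ c, t ≤ agreement (compressed g c) (Function.uncurry f)} =
        Nat.card {f : X × Y → Z // ∃ c, t ≤ agreement (compressed g c) f} :=
    Nat.card_congr ((Equiv.curry X Y Z).symm.subtypeEquiv fun _ => Iff.rfl)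
  rw [card_uncurry, ← Nat.card_prod]
  exact card_exists_le_agreement_mul_pow_le (compressed g) s t

end Compression

theorem lt_two_pow_sub_of_mul_three_pow_le {c e M t x : ℕ} (ht : 3 * M ≤ 4 * t)
    (hx : 8 * (e + x) < M) (hc : c * 3 ^ t ≤ 2 ^ e * 4 ^ M) : c < 2 ^ (M - x) := by
  by_contra! hle
  have two_pow_le : 2 ^ (9 * M) ≤ (3 ^ t) ^ 8 := calc
    2 ^ (9 * M) = 512 ^ M := by rw [pow_mul]; norm_num
    _ ≤ 729 ^ M := Nat.pow_le_pow_left (by norm_num) M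
    _ = 3 ^ (6 * M) := by rw [pow_mul]; norm_num
    _ ≤ 3 ^ (t * 8) := Nat.pow_le_pow_right (by norm_num) (by omega)
    _ = (3 ^ t) ^ 8 := pow_mul ..
  have eighth_power : 2 ^ (8 * (M - x) + 9 * M) ≤ 2 ^ (8 * e + 16 * M) := calc
    2 ^ (8 * (M - x) + 9 * M) = (2 ^ (M - x)) ^ 8 * 2 ^ (9 * M) := by ring
    _ ≤ c ^ 8 * (3 ^ t) ^ 8 := by gcongr
    _ = (c * 3 ^ t) ^ 8 := (mul_pow ..).symm
    _ ≤ (2 ^ e * 4 ^ M) ^ 8 := by gcongr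
    _ = 2 ^ (8 * e + 16 * M) := by
      rw [show 4 = 2 ^ 2 by norm_num, ← pow_mul, ← pow_add, ← pow_mul]
      ring_nf
  have := (Nat.pow_le_pow_iff_right one_lt_two).mp eighth_power
  omega

theorem stmt_4_general {X Y A B Λ : Type*} [Finite X] [Finite Y] [Finite A] [Finite B] [Finite Λ]
    {e x : ℕ} (hcode : Nat.card ((X → A) × (Y → B) × Λ) ≤ 2 ^ e)
    (hx : 8 * (e + x) < Nat.card X * Nat.card Y) (g : A → B → Λ → Bool) :
    Nat.card {f : X → Y → Bool // ∃ (fA : X → A) (fB : Y → B) (lam : Λ),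
        3 * (Nat.card X * Nat.card Y) ≤
          4 * Nat.card {p : X × Y // g (fA p.1) (fB p.2) lam = f p.1 p.2}} <
      2 ^ (Nat.card X * Nat.card Y - x) := by
  set M := Nat.card X * Nat.card Y
  obtain ⟨t, ht, ht_least⟩ : ∃ t, 3 * M ≤ 4 * t ∧ ∀ a, 3 * M ≤ 4 * a → t ≤ a :=
    ⟨(3 * M + 3) / 4, by omega, by omega⟩
  have count := card_exists_le_agreement_compressed_mul_pow_le (X := X) (Y := Y) g 2 t
  rw [Nat.card_eq_fintype_card (α := Bool), Fintype.card_bool] at count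
  refine lt_of_le_of_lt (Nat.card_mono (Set.toFinite _) ?_)
    (lt_two_pow_sub_of_mul_three_pow_le ht hx (count.trans (Nat.mul_le_mul_right _ hcode)))
  rintro f ⟨fA, fB, lam, hf⟩
  exact ⟨(fA, fB, lam), ht_least _ hf⟩

theorem eight_mul_code_length_add_lt {n k q : ℕ} (hn : 10 ≤ n) (hq : 2 * q ≤ n - 10)
    (hk : k ≤ 10 * 2 ^ (2 * q + 2)) :
    8 * ((2 ^ n * k + (2 ^ n * k + k)) + 2 ^ n) < 2 ^ n * 2 ^ n := by
  have le_two_pow_n : 2 ^ 10 ≤ 2 ^ n := Nat.pow_le_pow_right two_pos hn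
  have k_le : 128 * k ≤ 5 * 2 ^ n := calc
    128 * k ≤ 5 * 2 ^ (2 * q + 10) := by rw [pow_add] at hk ⊢; omega
    _ ≤ 5 * 2 ^ n := by gcongr <;> omega
  have k_lt : 17 * k + 8 < 2 ^ n := by omega
  calc 8 * ((2 ^ n * k + (2 ^ n * k + k)) + 2 ^ n) = 2 ^ n * (16 * k + 8) + 8 * k := by ring
    _ ≤ 2 ^ n * (16 * k + 8) + 2 ^ n * k := by gcongr; omega
    _ = 2 ^ n * (17 * k + 8) := by ring
    _ < 2 ^ n * 2 ^ n := by gcongr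

theorem card_bit_codes (n k : ℕ) :
    Nat.card (((Fin n → Bool) → Fin k → Bool) × ((Fin n → Bool) → Fin k → Bool) ×
      (Fin k → Bool)) = 2 ^ (2 ^ n * k + (2 ^ n * k + k)) := by
  simp [pow_add, pow_mul, pow_right_comm]

/-- counting lemma: for `n ≥ 10`, `q ≤ n/2 − 5`, `k ≤ 10·2^(2q+2)` and any
fixed `g : {0,1}^(3k) → {0,1}`, the number of functions `f : {0,1}^(2n) → {0,1}` that
agree with some compressed function `(x,y) ↦ g(f_A(x), f_B(y), λ)` on at least `3/4` of
all input pairs is strictly less than `2^(2^(2n) − 2^n)`. -/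
theorem stmt_4 (n k q : ℕ) (hn : 10 ≤ n) (hq : 2 * q ≤ n - 10)
    (hk : k ≤ 10 * 2 ^ (2 * q + 2))
    (g : (Fin k → Bool) → (Fin k → Bool) → (Fin k → Bool) → Bool) :
    Nat.card {f : (Fin n → Bool) → (Fin n → Bool) → Bool //
      ∃ fA fB : (Fin n → Bool) → (Fin k → Bool), ∃ lam : Fin k → Bool,
        3 * 2 ^ (2 * n) ≤
          4 * Nat.card {p : (Fin n → Bool) × (Fin n → Bool) //
                g (fA p.1) (fB p.2) lam = f p.1 p.2}} <
      2 ^ (2 ^ (2 * n) - 2 ^ n) := by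
  have hbits : Nat.card (Fin n → Bool) = 2 ^ n := by simp
  have hx := eight_mul_code_length_add_lt hn hq hk
  simpa only [hbits, two_mul, pow_add] using
    stmt_4_general (card_bit_codes n k).le (by rwa [hbits]) g
end

section
/- Let ρ be a density matrix on ℂ² ⊗ ℂ² (i.e., a positive semidefinite 4×4 complex matrix of trace 1) and let δ > 0. Define p₁ := ⟨Ω|ρ|Ω⟩ with Ω = (|00⟩+|11⟩)/√2, and p₂ := (1/2)(⟨++|ρ|++⟩ + ⟨−−|ρ|−−⟩) + (1/2)(⟨00|ρ|00⟩ + ⟨11|ρ|11⟩), where |±⟩ = (|0⟩±|1⟩)/√2. Then: (1) if p₁ ≥ 1 − δ then p₂ ≥ 1 − δ; and (2) if p₂ ≥ 1 − δ then p₁ ≥ 1 − 2δ. -/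
noncomputable section

namespace Stmt7

/-- The maximally entangled state `Ω = (|00⟩+|11⟩)/√2`. -/
def Omega : Fin 2 × Fin 2 → ℂ := fun p => if p.1 = p.2 then (1 / (Real.sqrt 2 : ℝ) : ℂ) else 0

/-- Computational basis vector `|r a⟩`. -/
def ket (r a : Fin 2) : Fin 2 × Fin 2 → ℂ := fun p => if p = (r, a) then 1 else 0

/-- `|++⟩`. -/
def pp : Fin 2 × Fin 2 → ℂ := fun _ => (1 / 2 : ℂ)

/-- `|−−⟩`. -/
def mm : Fin 2 × Fin 2 → ℂ := fun p => if p.1 = p.2 then (1 / 2 : ℂ) else (-(1 / 2) : ℂ)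

/-- The expectation value `⟨v|ρ|v⟩` (its real part). -/
def expec (ρ : Matrix (Fin 2 × Fin 2) (Fin 2 × Fin 2) ℂ) (v : Fin 2 × Fin 2 → ℂ) : ℝ :=
  (∑ i, ∑ j, (starRingEnd ℂ) (v i) * ρ i j * v j).re

open scoped ComplexOrder

/-!
Both local tests are diagonal in the Bell basis `Φ⁺ = Ω, Φ⁻, Ψ⁺, Ψ⁻`: the Hadamard rotation
`(u, v) ↦ ((u + v)/√2, (u - v)/√2)` preserves `|u⟩⟨u| + |v⟩⟨v|`, it carries `|00⟩, |11⟩` to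
`Φ⁺, Φ⁻`, and it carries `|++⟩, |−−⟩` to `Φ⁺, Ψ⁺`. Hence `p₂ = p₁ + (q + r)/2`, where `q` and `r`
are the weights of `Φ⁻` and `Ψ⁺`. All four weights are nonnegative and sum to `tr ρ`, so
`p₁ ≤ p₂` and `2 p₂ ≤ p₁ + tr ρ`.
-/

open scoped Matrix

section SesquilinearForm

variable {n R : Type*} [Fintype n]

theorem star_dotProduct_mulVec_parallelogram [NonUnitalNonAssocRing R] [StarRing R]
    (A : Matrix n n R) (u v : n → R) :
    star (u + v) ⬝ᵥ A *ᵥ (u + v) + star (u - v) ⬝ᵥ A *ᵥ (u - v) =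
      2 • (star u ⬝ᵥ A *ᵥ u + star v ⬝ᵥ A *ᵥ v) := by
  simp only [star_add, star_sub, Matrix.mulVec_add, Matrix.mulVec_sub, add_dotProduct,
    sub_dotProduct, dotProduct_add, dotProduct_sub]
  abel

theorem star_smul_dotProduct_mulVec_smul [CommSemiring R] [StarRing R]
    (A : Matrix n n R) (c : R) (v : n → R) :
    star (c • v) ⬝ᵥ A *ᵥ (c • v) = star c * c * (star v ⬝ᵥ A *ᵥ v) := by
  rw [star_smul, Matrix.mulVec_smul, smul_dotProduct, dotProduct_smul, smul_eq_mul, smul_eq_mul,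
    mul_assoc]

end SesquilinearForm

/-- The Bell state `Φ⁻ = (|00⟩ - |11⟩)/√2`. -/
def phiMinus : Fin 2 × Fin 2 → ℂ := (1 / (Real.sqrt 2 : ℝ) : ℂ) • (ket 0 0 - ket 1 1)

/-- The Bell state `Ψ⁺ = (|01⟩ + |10⟩)/√2`. -/
def psiPlus : Fin 2 × Fin 2 → ℂ := (1 / (Real.sqrt 2 : ℝ) : ℂ) • (ket 0 1 + ket 1 0)

/-- The Bell state `Ψ⁻ = (|01⟩ - |10⟩)/√2`. -/
def psiMinus : Fin 2 × Fin 2 → ℂ := (1 / (Real.sqrt 2 : ℝ) : ℂ) • (ket 0 1 - ket 1 0)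

theorem Omega_eq_smul_ket_add_ket :
    Omega = (1 / (Real.sqrt 2 : ℝ) : ℂ) • (ket 0 0 + ket 1 1) := by
  ext ⟨r, a⟩
  fin_cases r <;> fin_cases a <;> simp [Omega, ket]

theorem pp_add_mm : pp + mm = ket 0 0 + ket 1 1 := by
  ext ⟨r, a⟩
  fin_cases r <;> fin_cases a <;> norm_num [pp, mm, ket]

theorem pp_sub_mm : pp - mm = ket 0 1 + ket 1 0 := by
  ext ⟨r, a⟩
  fin_cases r <;> fin_cases a <;> norm_num [pp, mm, ket]

section Expectation

variable (ρ : Matrix (Fin 2 × Fin 2) (Fin 2 × Fin 2) ℂ)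

theorem expec_eq_re_dotProduct (v : Fin 2 × Fin 2 → ℂ) :
    expec ρ v = (star v ⬝ᵥ ρ *ᵥ v).re := by
  simp only [expec, dotProduct, Matrix.mulVec, Finset.mul_sum, mul_assoc, Pi.star_apply,
    starRingEnd_apply]

theorem expec_smul (c : ℂ) (v : Fin 2 × Fin 2 → ℂ) :
    expec ρ (c • v) = Complex.normSq c * expec ρ v := by
  rw [expec_eq_re_dotProduct, expec_eq_re_dotProduct, star_smul_dotProduct_mulVec_smul,
    ← starRingEnd_apply, ← Complex.normSq_eq_conj_mul_self, Complex.re_ofReal_mul]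

theorem expec_add_add_expec_sub (u v : Fin 2 × Fin 2 → ℂ) :
    expec ρ (u + v) + expec ρ (u - v) = 2 * (expec ρ u + expec ρ v) := by
  simp only [expec_eq_re_dotProduct, ← Complex.add_re]
  rw [star_dotProduct_mulVec_parallelogram, Complex.re_nsmul, nsmul_eq_mul, Nat.cast_ofNat]

theorem expec_hadamard_rotation (u v : Fin 2 × Fin 2 → ℂ) :
    expec ρ ((1 / (Real.sqrt 2 : ℝ) : ℂ) • (u + v)) +
      expec ρ ((1 / (Real.sqrt 2 : ℝ) : ℂ) • (u - v)) = expec ρ u + expec ρ v := by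
  have normSq_inv_sqrt_two : Complex.normSq (1 / (Real.sqrt 2 : ℝ)) = 1 / 2 := by
    rw [map_div₀, map_one, Complex.normSq_ofReal, Real.mul_self_sqrt zero_le_two]
  rw [expec_smul, expec_smul, normSq_inv_sqrt_two, ← mul_add, expec_add_add_expec_sub]
  ring

theorem expec_ket_zero_zero_add_expec_ket_one_one :
    expec ρ (ket 0 0) + expec ρ (ket 1 1) = expec ρ Omega + expec ρ phiMinus := by
  rw [Omega_eq_smul_ket_add_ket, phiMinus, expec_hadamard_rotation]

theorem expec_ket_zero_one_add_expec_ket_one_zero :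
    expec ρ (ket 0 1) + expec ρ (ket 1 0) = expec ρ psiPlus + expec ρ psiMinus := by
  rw [psiPlus, psiMinus, expec_hadamard_rotation]

theorem expec_pp_add_expec_mm :
    expec ρ pp + expec ρ mm = expec ρ Omega + expec ρ psiPlus := by
  rw [Omega_eq_smul_ket_add_ket, psiPlus, ← pp_add_mm, ← pp_sub_mm, expec_hadamard_rotation]

theorem expec_ket (r a : Fin 2) : expec ρ (ket r a) = (ρ (r, a) (r, a)).re := by
  simp [expec, ket]

theorem sum_expec_bell_eq_re_trace :
    expec ρ Omega + expec ρ phiMinus + (expec ρ psiPlus + expec ρ psiMinus) = ρ.trace.re := by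
  rw [← expec_ket_zero_zero_add_expec_ket_one_one, ← expec_ket_zero_one_add_expec_ket_one_zero]
  simp only [expec_ket, Matrix.trace, Matrix.diag_apply, Fintype.sum_prod_type, Fin.sum_univ_two,
    Complex.add_re]
  ring

/-- The acceptance probability `p₂` of the local test M2, which measures in the `|±⟩` basis or in
the computational basis with probability `1/2` each and accepts equal outcomes. -/
def localAcceptance : ℝ :=
  (1 / 2) * (expec ρ pp + expec ρ mm) + (1 / 2) * (expec ρ (ket 0 0) + expec ρ (ket 1 1))

theorem localAcceptance_eq_expec_bell :
    localAcceptance ρ = expec ρ Omega + (1 / 2) * (expec ρ phiMinus + expec ρ psiPlus) := by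
  rw [localAcceptance, expec_pp_add_expec_mm, expec_ket_zero_zero_add_expec_ket_one_one]
  ring

variable {ρ}

theorem expec_nonneg (hρ : ρ.PosSemidef) (v : Fin 2 × Fin 2 → ℂ) : 0 ≤ expec ρ v := by
  rw [expec_eq_re_dotProduct]
  exact hρ.re_dotProduct_nonneg v

theorem expec_Omega_le_localAcceptance (hρ : ρ.PosSemidef) :
    expec ρ Omega ≤ localAcceptance ρ := by
  rw [localAcceptance_eq_expec_bell]
  linarith [expec_nonneg hρ phiMinus, expec_nonneg hρ psiPlus]

theorem two_mul_localAcceptance_le_expec_Omega_add_re_trace (hρ : ρ.PosSemidef) :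
    2 * localAcceptance ρ ≤ expec ρ Omega + ρ.trace.re := by
  rw [localAcceptance_eq_expec_bell, ← sum_expec_bell_eq_re_trace]
  linarith [expec_nonneg hρ psiMinus]

end Expectation

/-- equivalence (up to a factor 2 in the rejection probability) of the
Bell-measurement test M1 and the local test M2 on a two-qubit density matrix. -/
theorem stmt_7 (ρ : Matrix (Fin 2 × Fin 2) (Fin 2 × Fin 2) ℂ)
    (hρ : ρ.PosSemidef) (htr : ρ.trace = 1) (δ : ℝ) (hδ : 0 < δ) :
    (1 - δ ≤ expec ρ Omega →
      1 - δ ≤ (1 / 2) * (expec ρ pp + expec ρ mm)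
              + (1 / 2) * (expec ρ (ket 0 0) + expec ρ (ket 1 1))) ∧
    ((1 - δ ≤ (1 / 2) * (expec ρ pp + expec ρ mm)
              + (1 / 2) * (expec ρ (ket 0 0) + expec ρ (ket 1 1))) →
      1 - 2 * δ ≤ expec ρ Omega) := by
  have hupper := two_mul_localAcceptance_le_expec_Omega_add_re_trace hρ
  rw [htr, Complex.one_re] at hupper
  refine ⟨fun h => h.trans (expec_Omega_le_localAcceptance hρ),
    fun (h : 1 - δ ≤ localAcceptance ρ) => ?_⟩
  linarith

end Stmt7
end
end

section
/- Let r ∈ ℕ, p ∈ [0,1], t ∈ ℝ, and let μ be a probability measure on the finite set {0,1}^r of sequences ω = (ω₁,…,ω_r). For i ∈ {1,…,r} and ȳ ∈ {0,1}^{i−1}, write E_{i,ȳ} := {ω : ω_j = ȳ_j for all j < i}. (1) If μ({ω : ω_i = 1} ∩ E_{i,ȳ}) ≤ p · μ(E_{i,ȳ}) for every i and every ȳ ∈ {0,1}^{i−1}, then μ({ω : Σ_{i=1}^r ω_i ≥ t}) ≤ Σ_{j ∈ ℕ, t ≤ j ≤ r} C(r,j) p^j (1−p)^{r−j}. (2)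 If instead μ({ω : ω_i = 1} ∩ E_{i,ȳ}) ≥ p · μ(E_{i,ȳ}) for every i and every ȳ, then μ({ω : Σ_{i=1}^r ω_i ≥ t}) ≥ Σ_{j ∈ ℕ, t ≤ j ≤ r} C(r,j) p^j (1−p)^{r−j}. -/
open MeasureTheory

/-!
Let `N` be the number of successes before a trial `B`, and let `f` be monotone. Then
`f (N + 1_B) = f N + 1_B * d N`, where `d k = f (k + 1) - f k` is nonnegative, while averaging over
an independent Bernoulli(`p`) trial gives `f N + p * d N`. As `d` only sees `N`, a bound by `p` on
the success probability conditioned on `N` alone decides which expectation is larger. Averaging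
keeps `f` monotone, so replacing the trials one by one, starting from the last, compares the law of
the total with the binomial law; the tail is the case of the indicator of an upper set.
-/

open ProbabilityTheory Finset
open scoped ENNReal unitInterval

section Binomial

/-- The expectation of `f` after one further Bernoulli trial with success probability `p`, when the
current number of successes is `k`. -/
noncomputable def bernoulliAverage (p : I) (f : ℕ → ℝ≥0∞) (k : ℕ) : ℝ≥0∞ :=
  ENNReal.ofReal (1 - p) * f k + ENNReal.ofReal p * f (k + 1)

theorem monotone_bernoulliAverage (p : I) {f : ℕ → ℝ≥0∞} (hf : Monotone f) :
    Monotone (bernoulliAverage p f) := fun k l hkl => by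
  unfold bernoulliAverage
  gcongr <;> exact hf (by gcongr)

theorem choose_succ_mul_pow_sub {R : Type*} [CommSemiring R] (q : R) (n k : ℕ) :
    n.choose (k + 1) * q ^ (n - k) = q * (n.choose (k + 1) * q ^ (n - (k + 1))) := by
  rcases lt_or_ge k n with hk | hk
  · rw [show n - k = n - (k + 1) + 1 by omega]
    ring
  · simp [Nat.choose_eq_zero_of_lt (Nat.lt_succ_of_le hk)]

theorem binomial_succ (n : ℕ) (p : I) :
    binomial (n + 1) p = ENNReal.ofReal (1 - p) • binomial n p +
      ENNReal.ofReal p • (binomial n p).map (· + 1) := by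
  have hq : 0 ≤ 1 - (p : ℝ) := sub_nonneg.mpr p.2.2
  refine Measure.ext_of_singleton fun k => ?_
  rw [Measure.add_apply, Measure.smul_apply, Measure.smul_apply,
    Measure.map_apply .of_discrete .of_discrete, smul_eq_mul, smul_eq_mul]
  cases k with
  | zero =>
    have hpre : (· + 1) ⁻¹' {0} = (∅ : Set ℕ) := by ext; simp
    simp [hpre, binomial_singleton, ← ENNReal.ofReal_mul hq, pow_succ']
  | succ k =>
    have hpre : (· + 1) ⁻¹' {k + 1} = ({k} : Set ℕ) := by ext; simp
    rw [hpre, binomial_singleton, binomial_singleton, binomial_singleton, ← ENNReal.ofReal_mul hq,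
      ← ENNReal.ofReal_mul p.2.1, ← ENNReal.ofReal_add (mul_nonneg hq binomial_nonneg)
        (mul_nonneg p.2.1 binomial_nonneg), Nat.choose_succ_succ, Nat.add_sub_add_right]
    congr 1
    push_cast
    linear_combination (p : ℝ) ^ (k + 1) * choose_succ_mul_pow_sub (1 - (p : ℝ)) n k

theorem lintegral_binomial_succ (n : ℕ) (p : I) (f : ℕ → ℝ≥0∞) :
    ∫⁻ k, f k ∂binomial (n + 1) p = ∫⁻ k, bernoulliAverage p f k ∂binomial n p := by
  simp only [bernoulliAverage]
  rw [binomial_succ, lintegral_add_measure, lintegral_smul_measure, lintegral_smul_measure,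
    lintegral_map .of_discrete .of_discrete, lintegral_add_left .of_discrete,
    lintegral_const_mul _ .of_discrete, lintegral_const_mul _ .of_discrete, smul_eq_mul,
    smul_eq_mul]

theorem binomial_setOf_le (n : ℕ) (p : I) (t : ℝ) :
    binomial n p {k | t ≤ k} = ENNReal.ofReal (∑ j ∈ range (n + 1),
      if t ≤ (j : ℝ) then (n.choose j : ℝ) * p ^ j * (1 - p) ^ (n - j) else 0) := by
  rw [ENNReal.ofReal_sum_of_nonneg fun j _ => ite_nonneg binomial_nonneg le_rfl,
    binomial_eq_sum_dirac, Measure.finsetSum_apply, Nat.range_succ_eq_Iic]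
  refine sum_congr rfl fun j _ => ?_
  by_cases hj : t ≤ (j : ℝ) <;> simp [hj]

end Binomial

theorem monotone_indicator_one_of_isUpperSet {α : Type*} [Preorder α] {U : Set α}
    (hU : IsUpperSet U) : Monotone (U.indicator (1 : α → ℝ≥0∞)) := fun k l hkl => by
  by_cases hk : k ∈ U
  · simp [hk, hU hkl hk]
  · simp [hk]

variable {Ω β ι : Type*}

theorem filter_lt_insert_of_forall_lt [LinearOrder ι] {s : Finset ι} {a : ι}
    (ha : ∀ i ∈ s, i < a) : {j ∈ insert a s | j < a} = s := by
  grind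

theorem filter_lt_insert_of_le [LinearOrder ι] (s : Finset ι) {a i : ι}
    (hi : i ≤ a) : {j ∈ insert a s | j < i} = {j ∈ s | j < i} := by
  grind

/-- The number of successes (`true` outcomes) among the trials `Y i`, `i ∈ s`. -/
def successCount (Y : ι → Ω → Bool) (s : Finset ι) (ω : Ω) : ℕ :=
  ∑ i ∈ s, (Y i ω).toNat

theorem successCount_insert [DecidableEq ι] (Y : ι → Ω → Bool) {s : Finset ι} {a : ι}
    (ha : a ∉ s) (ω : Ω) :
    successCount Y (insert a s) ω = successCount Y s ω + (Y a ω).toNat := by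
  rw [successCount, sum_insert ha, add_comm, successCount]

theorem cast_successCount (Y : ι → Ω → Bool) (s : Finset ι) (ω : Ω) :
    (successCount Y s ω : ℝ) = ∑ i ∈ s, if Y i ω then (1 : ℝ) else 0 := by
  rw [successCount, Nat.cast_sum]
  refine sum_congr rfl fun i _ => ?_
  cases Y i ω <;> simp

variable [MeasurableSpace Ω] {μ ν : Measure Ω}

section Fibers

variable [MeasurableSpace β] [Countable β] [MeasurableSingletonClass β] {X : Ω → β}

theorem lintegral_comp_le_of_fiber_le (hX : Measurable X)
    (h : ∀ b, μ {ω | X ω = b} ≤ ν {ω | X ω = b}) (g : β → ℝ≥0∞) :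
    ∫⁻ ω, g (X ω) ∂μ ≤ ∫⁻ ω, g (X ω) ∂ν := by
  have hg : Measurable g := measurable_of_countable g
  rw [← lintegral_map hg hX, ← lintegral_map hg hX, lintegral_countable', lintegral_countable']
  refine ENNReal.tsum_le_tsum fun b => mul_le_mul_right ?_ (g b)
  rw [Measure.map_apply hX (measurableSet_singleton b),
    Measure.map_apply hX (measurableSet_singleton b)]
  exact h b

theorem measure_preimage_le_of_fiber_le (hX : Measurable X)
    (h : ∀ b, μ {ω | X ω = b} ≤ ν {ω | X ω = b}) (s : Set β) : μ (X ⁻¹' s) ≤ ν (X ⁻¹' s) := by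
  have hs : MeasurableSet (X ⁻¹' s) := hX s.to_countable.measurableSet
  rw [← lintegral_indicator_one hs, ← lintegral_indicator_one hs]
  exact lintegral_comp_le_of_fiber_le hX h (s.indicator 1)

theorem measure_le_of_cylinder_le [Nonempty β] {Y : ι → Ω → β} (hY : ∀ i, Measurable (Y i))
    {s : Set ι} [Finite s]
    (h : ∀ y : ι → β, μ {ω | ∀ j ∈ s, Y j ω = y j} ≤ ν {ω | ∀ j ∈ s, Y j ω = y j})
    {γ : Type*} {F : (ι → β) → γ} (hF : DependsOn F s) (c : γ) :
    μ {ω | F (fun j => Y j ω) = c} ≤ ν {ω | F (fun j => Y j ω) = c} := by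
  have : Nonempty γ := ⟨c⟩
  obtain ⟨G, rfl⟩ := dependsOn_iff_exists_comp.mp hF
  have hX : Measurable fun ω => s.domRestrict fun j => Y j ω :=
    measurable_pi_lambda _ fun j => hY j
  refine measure_preimage_le_of_fiber_le hX (fun b => ?_) (G ⁻¹' {c})
  obtain ⟨y, rfl⟩ := Subtype.surjective_restrict (β := fun _ : ι => β) (· ∈ s) b
  simpa [funext_iff] using h y

end Fibers

section Step

variable {N : Ω → ℕ} {B : Ω → Bool} {f : ℕ → ℝ≥0∞} {p : I}

theorem lintegral_comp_add_toNat (hN : Measurable N) (hB : Measurable B) (hf : Monotone f) :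
    ∫⁻ ω, f (N ω + (B ω).toNat) ∂μ =
      ∫⁻ ω, f (N ω) ∂μ + ∫⁻ ω in {ω | B ω = true}, (f (N ω + 1) - f (N ω)) ∂μ := by
  have hB' : MeasurableSet {ω | B ω = true} := hB (measurableSet_singleton true)
  have hfN : Measurable fun ω => f (N ω) := (measurable_of_countable f).comp hN
  rw [← lintegral_indicator hB', ← lintegral_add_left hfN]
  refine lintegral_congr fun ω => ?_
  cases hω : B ω
  · simp [hω]
  · simp [hω, add_tsub_cancel_of_le (hf (Nat.le_succ (N ω)))]

theorem lintegral_bernoulliAverage_comp (hN : Measurable N) (hf : Monotone f) (p : I) :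
    ∫⁻ ω, bernoulliAverage p f (N ω) ∂μ =
      ∫⁻ ω, f (N ω) ∂μ + ENNReal.ofReal p * ∫⁻ ω, (f (N ω + 1) - f (N ω)) ∂μ := by
  have hpq : ENNReal.ofReal (1 - p) + ENNReal.ofReal p = 1 := by
    rw [← ENNReal.ofReal_add (sub_nonneg.mpr p.2.2) p.2.1, sub_add_cancel, ENNReal.ofReal_one]
  have hfN : Measurable fun ω => f (N ω) := (measurable_of_countable f).comp hN
  have hd : Measurable fun ω => f (N ω + 1) - f (N ω) :=
    (measurable_of_countable fun k => f (k + 1) - f k).comp hN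
  rw [← lintegral_const_mul _ hd, ← lintegral_add_left hfN]
  refine lintegral_congr fun ω => ?_
  rw [bernoulliAverage]
  nth_rw 1 [← add_tsub_cancel_of_le (hf (Nat.le_succ (N ω)))]
  rw [mul_add, ← add_assoc, ← add_mul, hpq, one_mul]

theorem lintegral_comp_add_toNat_le (hN : Measurable N) (hB : Measurable B) (hf : Monotone f)
    (h : ∀ m, μ ({ω | B ω = true} ∩ {ω | N ω = m}) ≤ ENNReal.ofReal p * μ {ω | N ω = m}) :
    ∫⁻ ω, f (N ω + (B ω).toNat) ∂μ ≤
      ∫⁻ ω, bernoulliAverage p f (N ω) ∂μ := by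
  have hB' : MeasurableSet {ω | B ω = true} := hB (measurableSet_singleton true)
  rw [lintegral_comp_add_toNat hN hB hf, lintegral_bernoulliAverage_comp hN hf, ← smul_eq_mul,
    ← lintegral_smul_measure]
  gcongr 1
  refine lintegral_comp_le_of_fiber_le hN (fun m => ?_) fun k => f (k + 1) - f k
  rw [Measure.restrict_apply' hB', Set.inter_comm]
  exact h m

theorem le_lintegral_comp_add_toNat (hN : Measurable N) (hB : Measurable B) (hf : Monotone f)
    (h : ∀ m, ENNReal.ofReal p * μ {ω | N ω = m} ≤ μ ({ω | B ω = true} ∩ {ω | N ω = m})) :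
    ∫⁻ ω, bernoulliAverage p f (N ω) ∂μ ≤
      ∫⁻ ω, f (N ω + (B ω).toNat) ∂μ := by
  have hB' : MeasurableSet {ω | B ω = true} := hB (measurableSet_singleton true)
  rw [lintegral_comp_add_toNat hN hB hf, lintegral_bernoulliAverage_comp hN hf, ← smul_eq_mul,
    ← lintegral_smul_measure]
  gcongr 1
  refine lintegral_comp_le_of_fiber_le hN (fun m => ?_) fun k => f (k + 1) - f k
  rw [Measure.restrict_apply' hB', Set.inter_comm]
  exact h m

end Step

section SuccessCount

variable {Y : ι → Ω → Bool}

theorem measurable_successCount (hY : ∀ i, Measurable (Y i)) (s : Finset ι) :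
    Measurable (successCount Y s) :=
  Finset.measurable_fun_sum s fun i _ => (measurable_of_countable Bool.toNat).comp (hY i)

theorem lintegral_indicator_one_successCount (hY : ∀ i, Measurable (Y i)) (s : Finset ι)
    (U : Set ℕ) :
    ∫⁻ ω, U.indicator 1 (successCount Y s ω) ∂μ = μ {ω | successCount Y s ω ∈ U} :=
  lintegral_indicator_one (measurable_successCount hY s U.to_countable.measurableSet)

theorem measure_successCount_le_of_cylinder_le (hY : ∀ i, Measurable (Y i)) {s : Finset ι}
    (h : ∀ y : ι → Bool, μ {ω | ∀ j ∈ s, Y j ω = y j} ≤ ν {ω | ∀ j ∈ s, Y j ω = y j}) (m : ℕ) :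
    μ {ω | successCount Y s ω = m} ≤ ν {ω | successCount Y s ω = m} := by
  have hF : DependsOn (fun y : ι → Bool => ∑ i ∈ s, (y i).toNat) (s : Set ι) := fun x y hxy =>
    sum_congr rfl fun i hi => by rw [hxy i hi]
  exact measure_le_of_cylinder_le hY h hF m

theorem measure_inter_successCount_le_of_cylinder_le (hY : ∀ i, Measurable (Y i)) {s : Finset ι}
    {A : Set Ω} (hA : MeasurableSet A) {c : ℝ≥0∞}
    (h : ∀ y : ι → Bool,
      μ (A ∩ {ω | ∀ j ∈ s, Y j ω = y j}) ≤ c * μ {ω | ∀ j ∈ s, Y j ω = y j}) (m : ℕ) :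
    μ (A ∩ {ω | successCount Y s ω = m}) ≤ c * μ {ω | successCount Y s ω = m} := by
  simp only [Set.inter_comm A, ← Measure.restrict_apply' hA] at h ⊢
  exact measure_successCount_le_of_cylinder_le (ν := c • μ) hY h m

theorem le_measure_inter_successCount_of_le_cylinder (hY : ∀ i, Measurable (Y i)) {s : Finset ι}
    {A : Set Ω} (hA : MeasurableSet A) {c : ℝ≥0∞}
    (h : ∀ y : ι → Bool,
      c * μ {ω | ∀ j ∈ s, Y j ω = y j} ≤ μ (A ∩ {ω | ∀ j ∈ s, Y j ω = y j})) (m : ℕ) :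
    c * μ {ω | successCount Y s ω = m} ≤ μ (A ∩ {ω | successCount Y s ω = m}) := by
  simp only [Set.inter_comm A, ← Measure.restrict_apply' hA] at h ⊢
  exact measure_successCount_le_of_cylinder_le (μ := c • μ) hY h m

end SuccessCount

section StochasticDomination

variable [LinearOrder ι] {Y : ι → Ω → Bool} {s : Finset ι} {p : I} {f : ℕ → ℝ≥0∞}

theorem lintegral_successCount_le (hY : ∀ i, Measurable (Y i))
    (h : ∀ i ∈ s, ∀ m, μ ({ω | Y i ω = true} ∩ {ω | successCount Y {j ∈ s | j < i} ω = m}) ≤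
      ENNReal.ofReal p * μ {ω | successCount Y {j ∈ s | j < i} ω = m}) (hf : Monotone f) :
    ∫⁻ ω, f (successCount Y s ω) ∂μ ≤ μ Set.univ * ∫⁻ k, f k ∂binomial #s p := by
  induction s using Finset.induction_on_max generalizing f with
  | empty => simp [successCount, binomial_zero, mul_comm]
  | insert a s lt_a ih =>
    have ha : a ∉ s := fun hmem => (lt_a a hmem).false
    have h_last := h a (mem_insert_self a s)
    rw [filter_lt_insert_of_forall_lt lt_a] at h_last
    have h_init := fun i hi => filter_lt_insert_of_le s (lt_a i hi).le ▸ h i (mem_insert_of_mem hi)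
    simp only [successCount_insert Y ha, card_insert_of_notMem ha, lintegral_binomial_succ]
    exact (lintegral_comp_add_toNat_le (measurable_successCount hY s) (hY a) hf h_last).trans
      (ih h_init (monotone_bernoulliAverage p hf))

theorem le_lintegral_successCount (hY : ∀ i, Measurable (Y i))
    (h : ∀ i ∈ s, ∀ m, ENNReal.ofReal p * μ {ω | successCount Y {j ∈ s | j < i} ω = m} ≤
      μ ({ω | Y i ω = true} ∩ {ω | successCount Y {j ∈ s | j < i} ω = m})) (hf : Monotone f) :
    μ Set.univ * ∫⁻ k, f k ∂binomial #s p ≤ ∫⁻ ω, f (successCount Y s ω) ∂μ := by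
  induction s using Finset.induction_on_max generalizing f with
  | empty => simp [successCount, binomial_zero, mul_comm]
  | insert a s lt_a ih =>
    have ha : a ∉ s := fun hmem => (lt_a a hmem).false
    have h_last := h a (mem_insert_self a s)
    rw [filter_lt_insert_of_forall_lt lt_a] at h_last
    have h_init := fun i hi => filter_lt_insert_of_le s (lt_a i hi).le ▸ h i (mem_insert_of_mem hi)
    simp only [successCount_insert Y ha, card_insert_of_notMem ha, lintegral_binomial_succ]
    exact (ih h_init (monotone_bernoulliAverage p hf)).trans
      (le_lintegral_comp_add_toNat (measurable_successCount hY s) (hY a) hf h_last)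

theorem measure_successCount_mem_le {U : Set ℕ} (hU : IsUpperSet U) (hY : ∀ i, Measurable (Y i))
    (h : ∀ i ∈ s, ∀ m, μ ({ω | Y i ω = true} ∩ {ω | successCount Y {j ∈ s | j < i} ω = m}) ≤
      ENNReal.ofReal p * μ {ω | successCount Y {j ∈ s | j < i} ω = m}) :
    μ {ω | successCount Y s ω ∈ U} ≤ μ Set.univ * binomial #s p U := by
  rw [← lintegral_indicator_one_successCount hY,
    ← lintegral_indicator_one (μ := binomial #s p) .of_discrete]
  exact lintegral_successCount_le hY h (monotone_indicator_one_of_isUpperSet hU)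

theorem le_measure_successCount_mem {U : Set ℕ} (hU : IsUpperSet U) (hY : ∀ i, Measurable (Y i))
    (h : ∀ i ∈ s, ∀ m, ENNReal.ofReal p * μ {ω | successCount Y {j ∈ s | j < i} ω = m} ≤
      μ ({ω | Y i ω = true} ∩ {ω | successCount Y {j ∈ s | j < i} ω = m})) :
    μ Set.univ * binomial #s p U ≤ μ {ω | successCount Y s ω ∈ U} := by
  rw [← lintegral_indicator_one_successCount hY,
    ← lintegral_indicator_one (μ := binomial #s p) .of_discrete]
  exact le_lintegral_successCount hY h (monotone_indicator_one_of_isUpperSet hU)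

end StochasticDomination

theorem stmt_11_general {Ω : Type*} [MeasurableSpace Ω] {r : ℕ} {p : ℝ} (hp0 : 0 ≤ p) (hp1 : p ≤ 1)
    (t : ℝ) (μ : Measure Ω) [IsProbabilityMeasure μ] {Y : Fin r → Ω → Bool}
    (hY : ∀ i, Measurable (Y i)) :
    ((∀ (i : Fin r) (m : ℕ),
        μ ({ω | Y i ω = true} ∩ {ω | successCount Y {j | j < i} ω = m}) ≤
          ENNReal.ofReal p * μ {ω | successCount Y {j | j < i} ω = m}) →
      μ {ω | t ≤ ∑ i, (if Y i ω then (1 : ℝ) else 0)} ≤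
        ENNReal.ofReal (∑ j ∈ Finset.range (r + 1),
          if t ≤ (j : ℝ) then (r.choose j : ℝ) * p ^ j * (1 - p) ^ (r - j) else 0)) ∧
    ((∀ (i : Fin r) (m : ℕ),
        ENNReal.ofReal p * μ {ω | successCount Y {j | j < i} ω = m} ≤
          μ ({ω | Y i ω = true} ∩ {ω | successCount Y {j | j < i} ω = m})) →
      ENNReal.ofReal (∑ j ∈ Finset.range (r + 1),
          if t ≤ (j : ℝ) then (r.choose j : ℝ) * p ^ j * (1 - p) ^ (r - j) else 0) ≤
        μ {ω | t ≤ ∑ i, (if Y i ω then (1 : ℝ) else 0)}) := by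
  have hU : IsUpperSet {k : ℕ | t ≤ k} := (isUpperSet_Ici t).preimage Nat.mono_cast
  have binomial_tail := binomial_setOf_le r ⟨p, hp0, hp1⟩ t
  have total : μ Set.univ * binomial #(univ : Finset (Fin r)) ⟨p, hp0, hp1⟩ {k | t ≤ k} =
      binomial r ⟨p, hp0, hp1⟩ {k | t ≤ k} := by
    rw [measure_univ, one_mul, card_univ, Fintype.card_fin]
  simp only [← cast_successCount]
  rw [← binomial_tail, ← total]
  exact ⟨fun h => measure_successCount_mem_le hU hY fun i _ => h i,
    fun h => le_measure_successCount_mem hU hY fun i _ => h i⟩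

/-- comparison of a {0,1}-valued discrete-time process whose conditional
success probabilities are bounded by `p` with an i.i.d. Bernoulli(p) sequence, for the
tail of the sum. -/
theorem stmt_11 (r : ℕ) (p : ℝ) (hp0 : 0 ≤ p) (hp1 : p ≤ 1) (t : ℝ)
    (μ : Measure (Fin r → Bool)) [IsProbabilityMeasure μ] :
    ((∀ (i : Fin r) (y : Fin r → Bool),
        μ ({ω | ω i = true} ∩ {ω | ∀ j, j < i → ω j = y j}) ≤
          ENNReal.ofReal p * μ {ω | ∀ j, j < i → ω j = y j}) →
      μ {ω | t ≤ ∑ i, (if ω i then (1 : ℝ) else 0)} ≤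
        ENNReal.ofReal (∑ j ∈ Finset.range (r + 1),
          if t ≤ (j : ℝ) then (r.choose j : ℝ) * p ^ j * (1 - p) ^ (r - j) else 0)) ∧
    ((∀ (i : Fin r) (y : Fin r → Bool),
        ENNReal.ofReal p * μ {ω | ∀ j, j < i → ω j = y j} ≤
          μ ({ω | ω i = true} ∩ {ω | ∀ j, j < i → ω j = y j})) →
      ENNReal.ofReal (∑ j ∈ Finset.range (r + 1),
          if t ≤ (j : ℝ) then (r.choose j : ℝ) * p ^ j * (1 - p) ^ (r - j) else 0) ≤
        μ {ω | t ≤ ∑ i, (if ω i then (1 : ℝ) else 0)}) :=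
  ⟨fun h => (stmt_11_general hp0 hp1 t μ measurable_pi_apply).1 fun i =>
      measure_inter_successCount_le_of_cylinder_le measurable_pi_apply .of_discrete
        (by simpa only [mem_filter_univ] using h i),
    fun h => (stmt_11_general hp0 hp1 t μ measurable_pi_apply).2 fun i =>
      le_measure_inter_successCount_of_le_cylinder measurable_pi_apply .of_discrete
        (by simpa only [mem_filter_univ] using h i)⟩
end
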